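/- For every natural number n with n ∉ {1,2} and every x ∈ ℝ, the Wronskian of Ĥ_n and β_n satisfies Ĥ_n(x)·β_n'(x) − Ĥ_n'(x)·β_n(x) = C(n)·e^{x²}·(1+2x²)², where C(n) = −M₁(n) if n is odd and C(n) = M₂(n) if n is even (with M₂(0) = 1); in particular the Wronskian never vanishes, so Ĥ_n and β_n are linearly independent solutions. -/

import Mathlib

/-- Physicists' Hermite polynomials via the Rodrigues formula. -/
noncomputable def Hr (n : ℕ) (x : ℝ) : ℝ :=
  (-1) ^ n * Real.exp (x ^ 2) * iteratedDeriv n (fun t => Real.exp (-t ^ 2)) x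

/-- The function Ĥₙ. -/
noncomputable def Hhatr (n : ℕ) (x : ℝ) : ℝ :=
  Hr n x + 4 * (n : ℝ) * Hr (n - 2) x + 4 * (n : ℝ) * ((n : ℝ) - 3) * Hr (n - 4) x

/-- Even coefficients c_{2k}(n) of the generalized power series. -/
noncomputable def ceven (n k : ℕ) : ℂ :=
  if k = 0 then 1
  else if k = 1 then -(n : ℂ)
  else (-1) ^ k * 2 ^ k * (n : ℂ) * ((n : ℂ) - ((2 * (k : ℂ) - 1) ^ 2 + 1)) *
    (∏ j ∈ Finset.Icc 1 (k - 2), ((n : ℂ) - 2 * (1 + (j : ℂ)))) /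
      (Nat.factorial (2 * k) : ℂ)

/-- Odd coefficients: `codd n k` is c_{2k-1}(n), for k ≥ 1. -/
noncomputable def codd (n k : ℕ) : ℂ :=
  if k ≤ 1 then 1
  else (-1) ^ (k + 1) * 2 ^ (k - 1) * ((n : ℂ) - ((2 * ((k : ℂ) - 1)) ^ 2 + 1)) *
    (∏ j ∈ Finset.Icc 1 (k - 2), ((n : ℂ) - (2 * (1 + (j : ℂ)) - 1))) /
      (Nat.factorial (2 * k - 1) : ℂ)

/-- μₙ(z) = Σ_{k≥0} c_{2k}(n)·z^{2k}. -/
noncomputable def muF (n : ℕ) (z : ℂ) : ℂ := ∑' k : ℕ, ceven n k * z ^ (2 * k)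

/-- νₙ(z) = Σ_{k≥1} c_{2k-1}(n)·z^{2k-1}. -/
noncomputable def nuF (n : ℕ) (z : ℂ) : ℂ := ∑' k : ℕ, codd n (k + 1) * z ^ (2 * k + 1)

/-- βₙ = μₙ + νₙ. -/
noncomputable def betaF (n : ℕ) (z : ℂ) : ℂ := muF n z + nuF n z

/-- The proportionality constant M₁(n). -/
noncomputable def M1 (n : ℕ) : ℂ :=
  (-1) ^ ((n + 1) / 2) * (Nat.factorial n : ℂ) * 2 ^ ((n + 1) / 2) /
    (((n : ℂ) - 1) * ((n : ℂ) - 2) *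
      ∏ j ∈ Finset.Icc 1 ((n - 3) / 2), ((n : ℂ) - 2 * (1 + (j : ℂ)) + 1))

/-- The proportionality constant M₂(n), with M₂(0) = 1. -/
noncomputable def M2 (n : ℕ) : ℂ :=
  if n = 0 then 1
  else (-1) ^ ((n + 2) / 2) * (Nat.factorial n : ℂ) * 2 ^ (n / 2) /
    ((n : ℂ) * ((n : ℂ) - 1) * ((n : ℂ) - 2) *
      ∏ j ∈ Finset.Icc 1 ((n - 4) / 2), ((n : ℂ) - 2 * (1 + (j : ℂ))))

/-- The Wronskian constant: −M₁(n) for odd n, M₂(n) for even n. -/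
noncomputable def Cw (n : ℕ) : ℂ := if Odd n then -M1 n else M2 n

noncomputable def hh : ℕ → ℝ → ℝ
  | 0, _ => 1
  | 1, x => 2 * x
  | (n+2), x => 2 * x * hh (n+1) x - 2 * ((n:ℝ)+1) * hh n x

lemma hh_zero (x : ℝ) : hh 0 x = 1 := by simp [hh]
lemma hh_one (x : ℝ) : hh 1 x = 2 * x := by simp [hh]
lemma hh_succ (n : ℕ) (x : ℝ) : hh (n+2) x = 2 * x * hh (n+1) x - 2 * ((n:ℝ)+1) * hh n x := by
  simp [hh]

lemma hh_deriv_aux (n : ℕ) (x : ℝ) : HasDerivAt (hh n) (2 * x * hh n x - hh (n+1) x) x ∧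
    HasDerivAt (hh (n+1)) (2 * ((n:ℝ)+1) * hh n x) x := by
  induction n with
  | zero =>
    constructor
    · have : hh 0 = fun _ => (1:ℝ) := by ext y; simp [hh]
      rw [this]
      simpa [hh] using hasDerivAt_const x (1:ℝ)
    · have : hh (0+1) = fun y => 2 * y := by ext y; simp [hh]
      rw [this]
      simpa [hh] using (hasDerivAt_id x).const_mul (2:ℝ)
  | succ n ih =>
    obtain ⟨h1, h2⟩ := ih
    constructor
    · convert h2 using 1
      rw [hh_succ]; ring
    · have : hh (n+1+1) = fun y => 2 * y * hh (n+1) y - 2 * ((n:ℝ)+1) * hh n y := by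
        ext y; rw [hh_succ]
      rw [this]
      have := (((hasDerivAt_id x).const_mul (2:ℝ)).mul h2).sub (h1.const_mul (2 * ((n:ℝ)+1)))
      refine HasDerivAt.congr_deriv this ?_
      simp only [id]
      push_cast
      ring

lemma hh_d (n : ℕ) (x : ℝ) : HasDerivAt (hh n) (2 * x * hh n x - hh (n+1) x) x :=
  (hh_deriv_aux n x).1
lemma hh_d' (n : ℕ) (x : ℝ) : HasDerivAt (hh (n+1)) (2 * ((n:ℝ)+1) * hh n x) x :=
  (hh_deriv_aux n x).2

lemma iter_eq (n : ℕ) : iteratedDeriv n (fun t : ℝ => Real.exp (-t^2)) =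
    fun x => (-1)^n * (Real.exp (-x^2) * hh n x) := by
  induction n with
  | zero => ext x; simp [hh]
  | succ n ih =>
    rw [iteratedDeriv_succ, ih]
    ext x
    have he : HasDerivAt (fun x : ℝ => Real.exp (-x^2)) (Real.exp (-x^2) * (-(2*x))) x := by
      have := ((hasDerivAt_pow 2 x).neg).exp
      refine HasDerivAt.congr_deriv this ?_
      simp
    have := (he.mul (hh_d n x)).const_mul ((-1:ℝ)^n)
    refine (this.deriv).trans ?_
    ring

lemma Hr_eq (n : ℕ) : Hr n = hh n := by
  ext x
  unfold Hr
  rw [iter_eq]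
  have h1 : ((-1:ℝ)^n) * (-1)^n = 1 := by rw [← mul_pow]; simp
  have h2 : Real.exp (x^2) * Real.exp (-x^2) = 1 := by rw [← Real.exp_add]; simp
  calc _ = ((-1:ℝ)^n * (-1)^n) * (Real.exp (x^2) * Real.exp (-x^2)) * hh n x := by ring
    _ = _ := by rw [h1, h2]; ring

noncomputable def Hd (n : ℕ) (x : ℝ) : ℝ := deriv (Hhatr n) x

lemma Hhat_ode4 (m : ℕ) : ∃ H1 H2 : ℝ → ℝ, (∀ x, HasDerivAt (Hhatr (m+4)) (H1 x) x) ∧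
    (∀ x, HasDerivAt H1 (H2 x) x) ∧
    (∀ x, (1+2*x^2) * H2 x - (2*x*(1+2*x^2)+8*x) * H1 x + 2*((m+4:ℕ):ℝ)*(1+2*x^2)* Hhatr (m+4) x = 0) ∧
    Hhatr (m+4) 0 = -4 * (m+1) * hh m 0 ∧ H1 0 = 4 * (m+4) * hh (m+1) 0 := by
  refine ⟨fun x => 2*((m:ℝ)+4)*hh (m+3) x + 4*((m:ℝ)+4)*(2*((m:ℝ)+2)*hh (m+1) x)
      + 4*((m:ℝ)+4)*((m:ℝ)+1)*(2*x*hh m x - hh (m+1) x),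
    fun x => 2*((m:ℝ)+4)*(2*((m:ℝ)+3)*hh (m+2) x) + 4*((m:ℝ)+4)*(2*((m:ℝ)+2)*(2*((m:ℝ)+1)*hh m x))
      + 4*((m:ℝ)+4)*((m:ℝ)+1)*((2 * hh m x + 2*x*(2*x*hh m x - hh (m+1) x)) - 2*((m:ℝ)+1)*hh m x), ?_, ?_, ?_, ?_, ?_⟩
  · intro x
    have e : Hhatr (m+4) = fun x => hh (m+4) x + 4*((m+4:ℕ):ℝ)*hh (m+2) x
      + 4*((m+4:ℕ):ℝ)*(((m+4:ℕ):ℝ)-3)*hh m x := by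
      ext x; simp [Hhatr, Hr_eq]
    rw [e]
    have := ((hh_d' (m+3) x).add ((hh_d' (m+1) x).const_mul (4*((m+4:ℕ):ℝ)))).add
      ((hh_d m x).const_mul (4*((m+4:ℕ):ℝ)*(((m+4:ℕ):ℝ)-3)))
    refine HasDerivAt.congr_deriv this ?_
    push_cast; ring
  · intro x
    have := (((hh_d' (m+2) x).const_mul (2*((m:ℝ)+4))).add
      (((hh_d' m x).const_mul (2*((m:ℝ)+2))).const_mul (4*((m:ℝ)+4)))).add
      (((((hasDerivAt_id x).const_mul (2:ℝ)).mul (hh_d m x)).sub (hh_d' m x)).const_mul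
        (4*((m:ℝ)+4)*((m:ℝ)+1)))
    refine HasDerivAt.congr_deriv this ?_
    simp only [id]
    push_cast; ring
  · intro x
    simp only [Hhatr, Hr_eq, Nat.add_sub_cancel, show m + 4 - 2 = m + 2 by omega]
    rw [hh_succ (m+2), hh_succ (m+1), hh_succ m]
    push_cast; ring
  · simp only [Hhatr, Hr_eq, Nat.add_sub_cancel, show m + 4 - 2 = m + 2 by omega]
    rw [hh_succ (m+2), hh_succ (m+1), hh_succ m]
    push_cast; ring
  · simp only []
    rw [hh_succ (m+1)]
    push_cast; ring

lemma hh_odd0 (k : ℕ) : hh (2*k+1) 0 = 0 := by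
  induction k with
  | zero => simp [hh]
  | succ k ih =>
    rw [show 2*(k+1)+1 = (2*k+1)+2 by ring, hh_succ, ih]; simp

lemma hh_even0 (k : ℕ) : hh (2*k) 0 * (k.factorial:ℝ) = (-1)^k * ((2*k).factorial : ℝ) := by
  induction k with
  | zero => simp [hh]
  | succ k ih =>
    rw [show 2*(k+1) = (2*k)+2 by ring, hh_succ, Nat.factorial_succ, Nat.factorial_succ, Nat.factorial_succ]
    push_cast
    linear_combination (-2*(2*(k:ℝ)+1)*(k+1)) * ih

lemma prod_shift (f : ℕ → ℂ) (k : ℕ) : ∏ j ∈ Finset.Icc 1 k, f j = ∏ j ∈ Finset.range k, f (j+1) := by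
  induction k with
  | zero => simp
  | succ k ih => rw [Finset.prod_Icc_succ_top (by omega), ih, Finset.prod_range_succ]

lemma prod_fact (k : ℕ) : ∏ j ∈ Finset.range k, (2 * ((k:ℂ) - j)) = 2^k * (k.factorial : ℂ) := by
  induction k with
  | zero => simp
  | succ k ih =>
    rw [Finset.prod_range_succ', Nat.factorial_succ]
    have : ∏ j ∈ Finset.range k, (2 * (((k+1:ℕ):ℂ) - (j+1:ℕ))) = ∏ j ∈ Finset.range k, (2 * ((k:ℂ) - j)) := by
      apply Finset.prod_congr rfl; intros; push_cast; ring
    rw [this, ih]; push_cast; ring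

lemma hh_even0C (k : ℕ) : (hh (2*k) 0 : ℂ) = (-1)^k * ((2*k).factorial : ℂ) / (k.factorial:ℂ) := by
  have h : (k.factorial:ℂ) ≠ 0 := by exact_mod_cast k.factorial_ne_zero
  rw [eq_div_iff h]
  exact_mod_cast hh_even0 k

lemma M2_eq (k : ℕ) : M2 (2*k+4) = -4 * (2*k+1) * (hh (2*k) 0 : ℂ) := by
  have h : (k.factorial:ℂ) ≠ 0 := by exact_mod_cast k.factorial_ne_zero
  have h2 : (2:ℂ)^k ≠ 0 := by simp
  rw [hh_even0C, M2, if_neg (by omega), prod_shift, show (2*k+4-4)/2 = k by omega,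
    show (2*k+4+2)/2 = k+3 by omega, show (2*k+4)/2 = k+2 by omega]
  have : ∏ j ∈ Finset.range k, (((2*k+4:ℕ):ℂ) - 2 * (1 + ((j+1:ℕ):ℂ))) = 2^k * (k.factorial : ℂ) := by
    rw [← prod_fact]
    apply Finset.prod_congr rfl; intros; push_cast; ring
  rw [this]
  have e1 : ((2*k+4:ℕ):ℂ) ≠ 0 := by exact_mod_cast (by omega : 2*k+4 ≠ 0)
  have e2 : ((2*k+4:ℕ):ℂ) - 1 ≠ 0 := by
    have : ((2*k+3:ℕ):ℂ) ≠ 0 := by exact_mod_cast (by omega : 2*k+3 ≠ 0)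
    convert this using 1; push_cast; ring
  have e3 : ((2*k+4:ℕ):ℂ) - 2 ≠ 0 := by
    have : ((2*k+2:ℕ):ℂ) ≠ 0 := by exact_mod_cast (by omega : 2*k+2 ≠ 0)
    convert this using 1; push_cast; ring
  rw [show (2*k+4).factorial = (2*k+4)*((2*k+3)*((2*k+2)*((2*k+1)*(2*k).factorial))) from rfl]
  field_simp
  push_cast
  ring

lemma M1_eq (k : ℕ) : M1 (2*k+5) = 4 * (2*k+5) * (hh (2*k+2) 0 : ℂ) := by
  have h : ((k+1).factorial:ℂ) ≠ 0 := by exact_mod_cast (k+1).factorial_ne_zero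
  have h2 : (2:ℂ)^k ≠ 0 := by simp
  rw [show 2*k+2 = 2*(k+1) by ring, hh_even0C, M1, prod_shift, show (2*k+5-3)/2 = k+1 by omega,
    show (2*k+5+1)/2 = k+3 by omega]
  have : ∏ j ∈ Finset.range (k+1), (((2*k+5:ℕ):ℂ) - 2 * (1 + ((j+1:ℕ):ℂ)) + 1) = 2^(k+1) * ((k+1).factorial : ℂ) := by
    rw [← prod_fact]
    apply Finset.prod_congr rfl; intros; push_cast; ring
  rw [this]
  have e2 : ((2*k+5:ℕ):ℂ) - 1 ≠ 0 := by
    have : ((2*k+4:ℕ):ℂ) ≠ 0 := by exact_mod_cast (by omega : 2*k+4 ≠ 0)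
    convert this using 1; push_cast; ring
  have e3 : ((2*k+5:ℕ):ℂ) - 2 ≠ 0 := by
    have : ((2*k+3:ℕ):ℂ) ≠ 0 := by exact_mod_cast (by omega : 2*k+3 ≠ 0)
    convert this using 1; push_cast; ring
  rw [show (2*k+5).factorial = (2*k+5)*((2*k+4)*((2*k+3)*(2*(k+1)).factorial)) from rfl]
  field_simp
  push_cast
  ring

def Ent (b : ℕ → ℂ) : Prop := ∀ r : ℝ, 0 ≤ r → ∃ C : ℝ, ∀ m, ‖b m‖ * r ^ m ≤ C

def Db (b : ℕ → ℂ) : ℕ → ℂ := fun m => ((m:ℂ)+1) * b (m+1)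

def Sh (b : ℕ → ℂ) : ℕ → ℂ
  | 0 => 0
  | (m+1) => b m

lemma Ent.db {b : ℕ → ℂ} (hb : Ent b) : Ent (Db b) := by
  intro r hr
  obtain ⟨C, hC⟩ := hb (2*(r+1)) (by positivity)
  refine ⟨C, fun m => le_trans ?_ (hC (m+1))⟩
  have h1 : ‖Db b m‖ = ((m:ℝ)+1) * ‖b (m+1)‖ := by
    rw [Db, norm_mul]; congr 1
    have : ((m:ℂ)+1) = ((m+1:ℕ):ℂ) := by push_cast; rfl
    rw [this, Complex.norm_natCast]; push_cast; rfl
  rw [h1]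
  have h2 : ((m:ℝ)+1) ≤ 2^(m+1) := by
    have : m+1 < 2^(m+1) := Nat.lt_two_pow_self
    exact_mod_cast this.le
  have h3 : r^m ≤ (r+1)^(m+1) := by
    calc r^m ≤ (r+1)^m := by gcongr; linarith
      _ ≤ (r+1)^(m+1) := pow_le_pow_right₀ (by linarith) (by omega)
  rw [mul_pow]
  calc ((m:ℝ)+1) * ‖b (m+1)‖ * r^m = ‖b (m+1)‖ * (((m:ℝ)+1) * r^m) := by ring
    _ ≤ ‖b (m+1)‖ * (2^(m+1) * (r+1)^(m+1)) := by gcongr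

lemma Ent.summable_norm {b : ℕ → ℂ} (hb : Ent b) (r : ℝ) (hr : 0 ≤ r) :
    Summable (fun m => ‖b m‖ * r^m) := by
  obtain ⟨C, hC⟩ := hb (2*r) (by positivity)
  refine Summable.of_nonneg_of_le (fun m => by positivity) (fun m => ?_)
    (summable_geometric_two.mul_left C)
  have := hC m
  rw [mul_pow] at this
  have h2 : (0:ℝ) < (1/2)^m := by positivity
  have h3 : (2:ℝ)^m * (1/2)^m = 1 := by rw [← mul_pow]; norm_num
  calc ‖b m‖ * r^m = (‖b m‖ * (2^m * r^m)) * (1/2)^m := by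
        linear_combination (-‖b m‖ * r^m) * h3
    _ ≤ C * (1/2)^m := by gcongr

lemma Ent.hasSum {b : ℕ → ℂ} (hb : Ent b) (z : ℂ) :
    HasSum (fun m => b m * z^m) (∑' m, b m * z^m) := by
  apply Summable.hasSum
  apply Summable.of_norm
  simpa using hb.summable_norm ‖z‖ (norm_nonneg z)

lemma Ent.hasDerivAt {b : ℕ → ℂ} (hb : Ent b) (z : ℂ) :
    HasDerivAt (fun z => ∑' m, b m * z^m) (∑' m, Db b m * z^m) z := by
  set R := ‖z‖ + 1 with hR
  have hRpos : 0 < R := by positivity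
  have hsu : Summable (fun m : ℕ => ‖b m‖ * (m * R^(m-1))) := by
    rw [← summable_nat_add_iff 1]
    refine (hb.db.summable_norm R hRpos.le).congr fun m => ?_
    rw [Db, norm_mul]
    have : ((m:ℂ)+1) = ((m+1:ℕ):ℂ) := by push_cast; rfl
    rw [this, Complex.norm_natCast]; simp; ring
  have key := hasDerivAt_tsum_of_isPreconnected (𝕜 := ℂ) (g := fun m z => b m * z^m)
    (g' := fun m z => b m * (m * z^(m-1))) (y := z) (y₀ := z) (t := Metric.ball 0 R) hsu
    Metric.isOpen_ball (convex_ball (0:ℂ) R).isPreconnected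
    (fun m y _ => (hasDerivAt_pow m y).const_mul (b m)) (fun m y hy => by
      have : ‖y‖ ≤ R := by simpa using (Metric.mem_ball.1 hy).le
      rw [norm_mul, norm_mul, norm_pow, Complex.norm_natCast]
      gcongr) (by simp [hR]) (hb.hasSum z).summable (by simp [hR])
  refine key.congr_deriv ?_
  have hs : Summable (fun m : ℕ => b m * (m * z^(m-1))) := by
    refine Summable.of_norm_bounded hsu fun m => ?_
    rw [norm_mul, norm_mul, norm_pow, Complex.norm_natCast]
    gcongr
    linarith
  rw [hs.tsum_eq_zero_add]
  simp only [Nat.cast_zero, zero_mul, mul_zero, zero_add]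
  apply tsum_congr
  intro m
  simp [Db]; ring

lemma hasSum_sh {b : ℕ → ℂ} {z s : ℂ} (h : HasSum (fun m => b m * z^m) s) :
    HasSum (fun m => Sh b m * z^m) (z * s) := by
  rw [← hasSum_nat_add_iff' 1]
  simp only [Finset.sum_range_one, Sh, zero_mul, sub_zero]
  refine (h.mul_left z).congr_fun ?_
  intro m; ring

/-- coefficients -/
noncomputable def bb (n m : ℕ) : ℂ := if Even m then ceven n (m/2) else codd n (m/2+1)

lemma bb_even (n k : ℕ) : bb n (2*k) = ceven n k := by simp [bb]
lemma bb_odd (n k : ℕ) : bb n (2*k+1) = codd n (k+1) := by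
  rw [bb, if_neg (by simp), show (2*k+1)/2 = k by omega]

lemma prodA (n : ℕ) (f : ℕ → ℂ) (hf : ∀ j, ‖f j‖ ≤ n + 2 + 2*(j:ℝ)) (l : ℕ) :
    ‖∏ j ∈ Finset.Icc 1 l, f j‖ * ((l+2).factorial:ℝ) ≤ ((n:ℝ)+1)^l * ((2*l+4).factorial:ℝ) := by
  induction l with
  | zero => simp [Nat.factorial]; norm_num
  | succ l ih =>
    rw [Finset.prod_Icc_succ_top (by omega), norm_mul,
      show (l+1+2).factorial = (l+3) * (l+2).factorial from rfl,
      show (2*(l+1)+4).factorial = (2*l+6)*((2*l+5)*(2*l+4).factorial) from rfl]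
    have h1 : ‖f (l+1)‖ * ((l:ℝ)+3) ≤ ((n:ℝ)+1) * ((2*l+6)*(2*l+5)) := by
      have := hf (l+1)
      push_cast at this
      have hl : (0:ℝ) ≤ l := by positivity
      have hn : (0:ℝ) ≤ n := by positivity
      calc ‖f (l+1)‖ * ((l:ℝ)+3) ≤ (n+2+2*((l:ℝ)+1)) * ((l:ℝ)+3) := by gcongr
        _ ≤ _ := by nlinarith [mul_nonneg hl hn, mul_nonneg hl (mul_nonneg hl hn), mul_nonneg hl hl]
    calc _ = (‖∏ j ∈ Finset.Icc 1 l, f j‖ * ((l+2).factorial:ℝ)) * (‖f (l+1)‖ * ((l:ℝ)+3)) := by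
          push_cast; ring
      _ ≤ (((n:ℝ)+1)^l * ((2*l+4).factorial:ℝ)) * (((n:ℝ)+1) * ((2*l+6)*(2*l+5))) := by gcongr
      _ = _ := by push_cast; ring

lemma prodB (n : ℕ) (f : ℕ → ℂ) (hf : ∀ j, ‖f j‖ ≤ n + 2 + 2*(j:ℝ)) (l : ℕ) :
    ‖∏ j ∈ Finset.Icc 1 l, f j‖ * ((l+1).factorial:ℝ) ≤ ((n:ℝ)+1)^l * ((2*l+3).factorial:ℝ) := by
  induction l with
  | zero => simp [Nat.factorial]
  | succ l ih =>
    rw [Finset.prod_Icc_succ_top (by omega), norm_mul,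
      show (l+1+1).factorial = (l+2) * (l+1).factorial from rfl,
      show (2*(l+1)+3).factorial = (2*l+5)*((2*l+4)*(2*l+3).factorial) from rfl]
    have h1 : ‖f (l+1)‖ * ((l:ℝ)+2) ≤ ((n:ℝ)+1) * ((2*l+5)*(2*l+4)) := by
      have := hf (l+1)
      push_cast at this
      have hl : (0:ℝ) ≤ l := by positivity
      have hn : (0:ℝ) ≤ n := by positivity
      calc ‖f (l+1)‖ * ((l:ℝ)+2) ≤ (n+2+2*((l:ℝ)+1)) * ((l:ℝ)+2) := by gcongr
        _ ≤ _ := by nlinarith [mul_nonneg hl hn, mul_nonneg hl (mul_nonneg hl hn), mul_nonneg hl hl]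
    calc _ = (‖∏ j ∈ Finset.Icc 1 l, f j‖ * ((l+1).factorial:ℝ)) * (‖f (l+1)‖ * ((l:ℝ)+2)) := by
          push_cast; ring
      _ ≤ (((n:ℝ)+1)^l * ((2*l+3).factorial:ℝ)) * (((n:ℝ)+1) * ((2*l+5)*(2*l+4))) := by gcongr
      _ = _ := by push_cast; ring

lemma sq_bound (l : ℕ) : ((l:ℝ)+1)^2 ≤ 4^l := by
  have h2 : ((l:ℝ)+1) ≤ 2^l := by
    have : l < 2^l := Nat.lt_two_pow_self
    exact_mod_cast this
  calc ((l:ℝ)+1)^2 ≤ (2^l)^2 := by gcongr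
    _ = 4^l := by rw [← pow_mul, mul_comm, pow_mul]; norm_num

lemma q_bound (n l : ℕ) (s : ℝ) (hs : 0 ≤ s) (hs' : s ≤ 3*((l:ℝ)+1)) :
    ‖(n:ℂ) - ((s:ℂ)^2+1)‖ ≤ ((n:ℝ)+10) * 4^l := by
  have h1 : ‖(n:ℂ) - ((s:ℂ)^2+1)‖ ≤ n + (s^2+1) := by
    have : (n:ℂ) - ((s:ℂ)^2+1) = (((n:ℝ) - (s^2+1) : ℝ) : ℂ) := by push_cast; rfl
    rw [this, Complex.norm_real, Real.norm_eq_abs, abs_le]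
    have hn : (0:ℝ) ≤ n := by positivity
    constructor <;> nlinarith
  have h4 := sq_bound l
  have h5 : (1:ℝ) ≤ 4^l := one_le_pow₀ (by norm_num)
  have hn : (0:ℝ) ≤ n := by positivity
  have : s^2 ≤ (3*((l:ℝ)+1))^2 := by gcongr
  nlinarith

lemma fbound (n : ℕ) (s t : ℝ) (hs : 0 ≤ s) (hst : s ≤ t) : ‖(n:ℂ) - (s:ℂ)‖ ≤ n + t := by
  have : (n:ℂ) - (s:ℂ) = (((n:ℝ) - s : ℝ) : ℂ) := by push_cast; rfl
  rw [this, Complex.norm_real, Real.norm_eq_abs, abs_le]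
  have hn : (0:ℝ) ≤ n := by positivity
  constructor <;> linarith

lemma ceven_bound (n k : ℕ) : ‖ceven n k‖ * (k.factorial:ℝ) ≤
    (4*((n:ℝ)+1)*((n:ℝ)+10)) * (8*((n:ℝ)+1))^k := by
  have hn : (0:ℝ) ≤ n := by positivity
  rcases k with _ | _ | l
  · simp [ceven]; nlinarith
  · simp [ceven]; nlinarith [mul_nonneg hn hn, mul_nonneg hn (mul_nonneg hn hn)]
  · rw [ceven, if_neg (by omega), if_neg (by omega), show l+1+1-2 = l by omega]
    have hp := prodA n (fun j => (n:ℂ) - 2 * (1 + (j:ℂ))) (fun j => by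
      have := fbound n (2*(1+(j:ℝ))) (2+2*(j:ℝ)) (by positivity) (by linarith)
      push_cast at this ⊢
      linarith) l
    have hq := q_bound n l (2*(l:ℝ)+3) (by positivity) (by linarith [(Nat.cast_nonneg l : (0:ℝ) ≤ l)])
    have e : (2*((l+1+1:ℕ):ℂ)-1) = ((2*(l:ℝ)+3 : ℝ):ℂ) := by push_cast; ring
    rw [e]
    set P := ∏ j ∈ Finset.Icc 1 l, ((n:ℂ) - 2 * (1 + (j:ℂ))) with hP
    set q := (n:ℂ) - (((2*(l:ℝ)+3 : ℝ):ℂ)^2+1) with hqd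
    have hf : (0:ℝ) < ((2*l+4).factorial:ℝ) := by exact_mod_cast Nat.factorial_pos _
    simp only [norm_mul, norm_div, norm_pow, norm_neg, norm_one, one_pow, one_mul, Complex.norm_natCast, Complex.norm_ofNat]
    rw [show 2*(l+1+1) = 2*l+4 by ring, show l+1+1 = l+2 by ring]
    rw [div_mul_eq_mul_div, div_le_iff₀ hf]
    calc 2^(l+2) * (n:ℝ) * ‖q‖ * ‖P‖ * ((l+2).factorial:ℝ)
        = 2^(l+2) * (n:ℝ) * ‖q‖ * (‖P‖ * ((l+2).factorial:ℝ)) := by ring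
      _ ≤ 2^(l+2) * ((n:ℝ)+1) * (((n:ℝ)+10) * 4^l) * (((n:ℝ)+1)^l * ((2*l+4).factorial:ℝ)) := by
        gcongr; linarith
      _ = (4*((n:ℝ)+1)*((n:ℝ)+10)) * (8*((n:ℝ)+1))^l * ((2*l+4).factorial:ℝ) := by
        rw [show (8:ℝ) = 2*4 by norm_num, mul_pow, mul_pow]; ring
      _ ≤ _ := by
        gcongr
        · linarith
        · omega

lemma codd_bound (n k : ℕ) : ‖codd n (k+1)‖ * (k.factorial:ℝ) ≤
    (4*((n:ℝ)+1)*((n:ℝ)+10)) * (8*((n:ℝ)+1))^k := by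
  have hn : (0:ℝ) ≤ n := by positivity
  rcases k with _ | l
  · simp [codd]; nlinarith
  · rw [codd, if_neg (by omega), show l+1+1-2 = l by omega]
    have hp := prodB n (fun j => (n:ℂ) - (2 * (1 + (j:ℂ)) - 1)) (fun j => by
      have := fbound n (2*(1+(j:ℝ))-1) (2+2*(j:ℝ)) (by linarith [(Nat.cast_nonneg j : (0:ℝ) ≤ j)]) (by linarith)
      push_cast at this ⊢
      linarith) l
    have hq := q_bound n l (2*(l:ℝ)+2) (by positivity) (by linarith [(Nat.cast_nonneg l : (0:ℝ) ≤ l)])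
    have e : (2*(((l+1+1:ℕ):ℂ)-1)) = ((2*(l:ℝ)+2 : ℝ):ℂ) := by push_cast; ring
    rw [e]
    set P := ∏ j ∈ Finset.Icc 1 l, ((n:ℂ) - (2 * (1 + (j:ℂ)) - 1)) with hP
    set q := (n:ℂ) - (((2*(l:ℝ)+2 : ℝ):ℂ)^2+1) with hqd
    have hf : (0:ℝ) < ((2*l+3).factorial:ℝ) := by exact_mod_cast Nat.factorial_pos _
    simp only [norm_mul, norm_div, norm_pow, norm_neg, norm_one, one_pow, one_mul, Complex.norm_natCast, Complex.norm_ofNat]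
    rw [show 2*(l+1+1)-1 = 2*l+3 by omega, show l+1+1-1 = l+1 by omega]
    rw [div_mul_eq_mul_div, div_le_iff₀ hf]
    calc 2^(l+1) * ‖q‖ * ‖P‖ * ((l+1).factorial:ℝ)
        = 2^(l+1) * 1 * ‖q‖ * (‖P‖ * ((l+1).factorial:ℝ)) := by ring
      _ ≤ 2^(l+2) * ((n:ℝ)+1) * (((n:ℝ)+10) * 4^l) * (((n:ℝ)+1)^l * ((2*l+3).factorial:ℝ)) := by
        gcongr
        · norm_num
        · omega
        · linarith
      _ = (4*((n:ℝ)+1)*((n:ℝ)+10)) * (8*((n:ℝ)+1))^l * ((2*l+3).factorial:ℝ) := by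
        rw [show (8:ℝ) = 2*4 by norm_num, mul_pow, mul_pow]; ring
      _ ≤ _ := by
        gcongr
        · linarith
        · omega

lemma ent_aux (a K L r : ℝ) (k : ℕ) (hK : 0 ≤ K) (hL : 0 ≤ L) (hr : 0 ≤ r)
    (h : a * (k.factorial:ℝ) ≤ K * L^k) : a * r^(2*k) ≤ K * Real.exp (L*r^2) := by
  have hf : (0:ℝ) < (k.factorial:ℝ) := by exact_mod_cast Nat.factorial_pos _
  rw [← le_div_iff₀ hf] at h
  calc a * r^(2*k) ≤ K * L^k / k.factorial * r^(2*k) := by gcongr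
    _ = K * ((L*r^2)^k / k.factorial) := by rw [mul_pow, ← pow_mul]; ring
    _ ≤ _ := by
      gcongr
      exact Real.pow_div_factorial_le_exp _ (by positivity) k

lemma bb_ent (n : ℕ) : Ent (bb n) := by
  intro r hr
  refine ⟨(4*((n:ℝ)+1)*((n:ℝ)+10)) * Real.exp ((8*((n:ℝ)+1))*r^2) * (1+r), fun m => ?_⟩
  rcases Nat.even_or_odd' m with ⟨k, rfl | rfl⟩
  · rw [bb_even]
    have := ent_aux _ _ _ r k (by positivity) (by positivity) hr (ceven_bound n k)
    refine this.trans ?_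
    apply le_mul_of_one_le_right (by positivity); linarith
  · rw [bb_odd]
    have := ent_aux _ _ _ r k (by positivity) (by positivity) hr (codd_bound n k)
    rw [pow_succ, ← mul_assoc]
    gcongr
    linarith

lemma betaF_eq (n : ℕ) (z : ℂ) : betaF n z = ∑' m, bb n m * z^m := by
  have hs := ((bb_ent n).hasSum z).summable
  have he : Summable (fun k => bb n (2*k) * z^(2*k)) := by
    have := hs.comp_injective (i := fun k : ℕ => 2*k) (fun a b h => by simp at h; exact h)
    simpa only [Function.comp_def] using this
  have ho : Summable (fun k => bb n (2*k+1) * z^(2*k+1)) := by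
    have := hs.comp_injective (i := fun k : ℕ => 2*k+1) (fun a b h => by simp at h; exact h)
    simpa only [Function.comp_def] using this
  have key := tsum_even_add_odd (f := fun m => bb n m * z^m) he ho
  rw [← key, betaF, muF, nuF]
  simp only [bb_even, bb_odd]

lemma bb_rec (n k : ℕ) : ((k:ℂ)+4)*(k+3)*bb n (k+4) + 2*(k+2)*(k+1)*bb n (k+2) - 10*(k+2)*bb n (k+2)
    - 4*k*bb n k + 2*n*bb n (k+2) + 4*n*bb n k = 0 := by
  rcases Nat.even_or_odd' k with ⟨i, rfl | rfl⟩
  · rw [show 2*i+4 = 2*(i+2) by ring, show 2*i+2 = 2*(i+1) by ring, bb_even, bb_even, bb_even]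
    rcases i with _ | _ | l
    · simp [ceven, Nat.factorial]; ring
    · simp [ceven, Nat.factorial]; ring
    · simp only [ceven]
      rw [if_neg (by omega), if_neg (by omega), if_neg (by omega), if_neg (by omega), if_neg (by omega), if_neg (by omega)]
      rw [show l+1+1+2-2 = l+1+1 by omega, show l+1+1+1-2 = l+1 by omega, show l+1+1-2 = l by omega,
        Finset.prod_Icc_succ_top (by omega), Finset.prod_Icc_succ_top (by omega)]
      have hf : ((2*l+4).factorial:ℂ) ≠ 0 := by exact_mod_cast Nat.factorial_ne_zero _
      rw [show (2*(l+1+1+2)).factorial = (2*l+8)*((2*l+7)*((2*l+6)*((2*l+5)*(2*l+4).factorial))) from rfl,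
        show (2*(l+1+1+1)).factorial = ((2*l+6)*((2*l+5)*(2*l+4).factorial)) from rfl,
        show (2*(l+1+1)).factorial = (2*l+4).factorial from rfl]
      have h5 : (2*(l:ℂ)+5) ≠ 0 := by exact_mod_cast (by omega : 2*l+5 ≠ 0)
      have h6 : (2*(l:ℂ)+6) ≠ 0 := by exact_mod_cast (by omega : 2*l+6 ≠ 0)
      have h7 : (2*(l:ℂ)+7) ≠ 0 := by exact_mod_cast (by omega : 2*l+7 ≠ 0)
      have h8 : (2*(l:ℂ)+8) ≠ 0 := by exact_mod_cast (by omega : 2*l+8 ≠ 0)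
      push_cast
      generalize ∏ j ∈ Finset.Icc 1 l, ((n:ℂ) - 2 * (1 + (j:ℂ))) = P
      generalize ((2*l+4).factorial:ℂ) = F at *
      field_simp
      ring
  · rw [show 2*i+1+4 = 2*(i+2)+1 by ring, show 2*i+1+2 = 2*(i+1)+1 by ring, bb_odd, bb_odd, bb_odd]
    rcases i with _ | l
    · simp [codd, Nat.factorial]; ring
    · simp only [codd]
      rw [if_neg (by omega), if_neg (by omega), if_neg (by omega)]
      rw [show l+1+2+1-2 = l+1+1 by omega, show l+1+1+1-2 = l+1 by omega, show l+1+1-2 = l by omega,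
        Finset.prod_Icc_succ_top (by omega), Finset.prod_Icc_succ_top (by omega)]
      have hf : ((2*l+3).factorial:ℂ) ≠ 0 := by exact_mod_cast Nat.factorial_ne_zero _
      rw [show (2*(l+1+2+1)-1).factorial = (2*l+7)*((2*l+6)*((2*l+5)*((2*l+4)*(2*l+3).factorial))) from rfl,
        show (2*(l+1+1+1)-1).factorial = ((2*l+5)*((2*l+4)*(2*l+3).factorial)) from rfl,
        show (2*(l+1+1)-1).factorial = (2*l+3).factorial from rfl,
        show l+1+2+1-1 = l+3 by omega, show l+1+1+1-1 = l+2 by omega, show l+1+1-1 = l+1 by omega]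
      have h5 : (2*(l:ℂ)+5) ≠ 0 := by exact_mod_cast (by omega : 2*l+5 ≠ 0)
      have h6 : (2*(l:ℂ)+6) ≠ 0 := by exact_mod_cast (by omega : 2*l+6 ≠ 0)
      have h7 : (2*(l:ℂ)+7) ≠ 0 := by exact_mod_cast (by omega : 2*l+7 ≠ 0)
      have h8 : (2*(l:ℂ)+4) ≠ 0 := by exact_mod_cast (by omega : 2*l+4 ≠ 0)
      push_cast
      generalize ∏ j ∈ Finset.Icc 1 l, ((n:ℂ) - (2 * (1 + (j:ℂ)) - 1)) = P
      generalize ((2*l+3).factorial:ℂ) = F at *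
      field_simp
      ring

lemma bb_0 (n : ℕ) : bb n 0 = 1 := by simp [bb, ceven]
lemma bb_1 (n : ℕ) : bb n 1 = 1 := by simp [bb, codd]
lemma bb_2 (n : ℕ) : bb n 2 = -n := by simp [bb, ceven]
lemma bb_3 (n : ℕ) : bb n 3 = (5-n)/3 := by
  rw [bb, if_neg (by decide)]; simp [codd, Nat.factorial]; ring

lemma beta_ode (n : ℕ) : ∃ B1 B2 : ℂ → ℂ, (∀ z, HasDerivAt (betaF n) (B1 z) z) ∧
    (∀ z, HasDerivAt B1 (B2 z) z) ∧
    (∀ z, (1+2*z^2) * B2 z - (2*z*(1+2*z^2)+8*z) * B1 z + 2*(n:ℂ)*(1+2*z^2)* betaF n z = 0) ∧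
    betaF n 0 = 1 ∧ B1 0 = 1 := by
  have hb := bb_ent n
  have hfun : betaF n = fun z => ∑' m, bb n m * z^m := by ext z; exact betaF_eq n z
  refine ⟨fun z => ∑' m, Db (bb n) m * z^m, fun z => ∑' m, Db (Db (bb n)) m * z^m, ?_, ?_, ?_, ?_, ?_⟩
  · intro z; rw [hfun]; exact hb.hasDerivAt z
  · intro z; exact hb.db.hasDerivAt z
  · intro z
    rw [betaF_eq]
    have s0 := hb.hasSum z
    have s1 := hb.db.hasSum z
    have s2 := hb.db.db.hasSum z
    have T := (((((s2.add ((hasSum_sh (hasSum_sh s2)).mul_left 2)).sub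
      ((hasSum_sh s1).mul_left 10)).sub ((hasSum_sh (hasSum_sh (hasSum_sh s1))).mul_left 4)).add
      (s0.mul_left (2*(n:ℂ)))).add ((hasSum_sh (hasSum_sh s0)).mul_left (4*(n:ℂ))))
    have Z := T.unique ((hasSum_zero).congr_fun ?_)
    · linear_combination Z
    · intro m
      rcases m with _ | _ | k
      · simp [Sh, Db, bb_0, bb_2]; ring
      · simp [Sh, Db, bb_1, bb_3]; ring
      · have R := bb_rec n k
        rcases k with _ | k
        · simp [Sh, Db] at R ⊢
          linear_combination (z^2) * R
        · simp only [Sh, Db]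
          push_cast at R ⊢
          linear_combination (z^(k+1+1+1)) * R
  · rw [betaF_eq, tsum_eq_single 0 (by intro m hm; simp [hm])]; simp [bb_0]
  · simp only []
    rw [tsum_eq_single 0 (by intro m hm; simp [hm])]; simp [Db, bb_1]

lemma Hhat_all (n : ℕ) (hn : n ∉ ({1, 2} : Set ℕ)) : ∃ H1 H2 : ℝ → ℝ,
    (∀ x, HasDerivAt (Hhatr n) (H1 x) x) ∧ (∀ x, HasDerivAt H1 (H2 x) x) ∧
    (∀ x, (1+2*x^2) * H2 x - (2*x*(1+2*x^2)+8*x) * H1 x + 2*(n:ℝ)*(1+2*x^2)* Hhatr n x = 0) ∧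
    ((Hhatr n 0 - H1 0 : ℝ) : ℂ) = Cw n ∧ Cw n ≠ 0 := by
  rcases n with _ | _ | _ | _ | m
  · have e : Hhatr 0 = fun _ => 1 := by ext x; simp [Hhatr, Hr_eq, hh]
    refine ⟨fun _ => 0, fun _ => 0, ?_, ?_, ?_, ?_, ?_⟩
    · intro x; rw [e]; exact hasDerivAt_const _ _
    · intro x; exact hasDerivAt_const _ _
    · intro x; simp
    · simp [e, Cw, M2]
    · simp [Cw, M2]
  · simp at hn
  · simp at hn
  · have e : Hhatr 3 = fun x => 8*x^3+12*x := by
      ext x; simp [Hhatr, Hr_eq, hh]; ring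
    have c : Cw 3 = -12 := by
      rw [Cw, if_pos (by decide), M1]; simp [Nat.factorial]; norm_num
    refine ⟨fun x => 24*x^2+12, fun x => 48*x, ?_, ?_, ?_, ?_, ?_⟩
    · intro x; simp only [zero_add]; rw [e]
      refine HasDerivAt.congr_deriv (((hasDerivAt_pow 3 x).const_mul 8).add ((hasDerivAt_id x).const_mul 12)) ?_
      push_cast; ring
    · intro x
      refine HasDerivAt.congr_deriv (((hasDerivAt_pow 2 x).const_mul 24).add_const 12) ?_
      push_cast; ring
    · intro x; simp only [zero_add]; rw [e]; push_cast; ring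
    · simp only [zero_add]; norm_num [e, c]
    · simp only [zero_add]; norm_num [c]
  · obtain ⟨H1, H2, a1, a2, a3, a4, a5⟩ := Hhat_ode4 m
    have hz : ∀ k, (hh (2*k) 0 : ℂ) ≠ 0 := by
      intro k
      have h : (k.factorial:ℂ) ≠ 0 := by exact_mod_cast k.factorial_ne_zero
      have h' : ((2*k).factorial:ℂ) ≠ 0 := by exact_mod_cast (2*k).factorial_ne_zero
      rw [hh_even0C]; simp [h, h']
    refine ⟨H1, H2, a1, a2, a3, ?_⟩
    simp only [show m+1+1+1+1 = m+4 by ring] at *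
    rw [a4, a5]
    rcases Nat.even_or_odd' m with ⟨k, rfl | rfl⟩
    · have ho : ¬ Odd (2*k+4) := by rw [Nat.not_odd_iff_even]; exact ⟨k+2, by ring⟩
      rw [hh_odd0, Cw, if_neg ho, M2_eq]
      refine ⟨by push_cast; ring, ?_⟩
      have h1 : (2*(k:ℂ)+1) ≠ 0 := by exact_mod_cast (by omega : 2*k+1 ≠ 0)
      simp [h1, hz]
    · have ho : Odd (2*k+1+4) := ⟨k+2, by ring⟩
      rw [hh_odd0, Cw, if_pos ho, show 2*k+1+4 = 2*k+5 by ring, M1_eq, show 2*k+1+1 = 2*k+2 by ring]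
      refine ⟨by push_cast; ring, ?_⟩
      have h1 : (2*(k:ℂ)+5) ≠ 0 := by exact_mod_cast (by omega : 2*k+5 ≠ 0)
      have := hz (k+1)
      rw [show 2*(k+1) = 2*k+2 by ring] at this
      simp [h1, this]

lemma ofReal_ne (x : ℝ) : (1 + 2 * (x:ℂ)^2) ≠ 0 := by
  have : (1+2*x^2) ≠ 0 := by positivity
  exact_mod_cast this

lemma weight_d (x : ℝ) : HasDerivAt (fun x : ℝ => Real.exp (-x^2) / (1+2*x^2)^2)
    (Real.exp (-x^2) * (-(2*x*(1+2*x^2) + 8*x)) / (1+2*x^2)^3) x := by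
  have he : HasDerivAt (fun x : ℝ => Real.exp (-x^2)) (Real.exp (-x^2) * (-(2*x))) x := by
    have := ((hasDerivAt_pow 2 x).neg).exp
    refine HasDerivAt.congr_deriv this ?_
    simp
  have hp : (1+2*x^2) ≠ 0 := by positivity
  have hd : HasDerivAt (fun x : ℝ => (1+2*x^2)^2) (2*(1+2*x^2)*(4*x)) x := by
    have := (((hasDerivAt_pow 2 x).const_mul 2).const_add 1).pow 2
    refine HasDerivAt.congr_deriv this ?_
    push_cast; ring
  refine HasDerivAt.congr_deriv (he.div hd (by positivity)) ?_
  field_simp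
  ring

theorem stmt19 (n : ℕ) (hn : n ∉ ({1, 2} : Set ℕ)) (x : ℝ) :
    ((Complex.ofReal (Hhatr n x)) * deriv (fun t : ℝ => betaF n (t : ℂ)) x
        - (Complex.ofReal (deriv (Hhatr n) x)) * betaF n (x : ℂ)
      = Cw n * Complex.exp ((x : ℂ) ^ 2) * (1 + 2 * (x : ℂ) ^ 2) ^ 2) ∧
    ((Complex.ofReal (Hhatr n x)) * deriv (fun t : ℝ => betaF n (t : ℂ)) x
        - (Complex.ofReal (deriv (Hhatr n) x)) * betaF n (x : ℂ) ≠ 0) := by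
  obtain ⟨H1, H2, a1, a2, a3, a4, a5⟩ := Hhat_all n hn
  obtain ⟨B1, B2, b1, b2, b3, b4, b5⟩ := beta_ode n
  have d1 : ∀ t : ℝ, HasDerivAt (fun t : ℝ => betaF n (t:ℂ)) (B1 t) t := fun t => (b1 t).comp_ofReal
  have d2 : ∀ t : ℝ, HasDerivAt (fun t : ℝ => B1 (t:ℂ)) (B2 t) t := fun t => (b2 t).comp_ofReal
  have e1 : ∀ t : ℝ, HasDerivAt (fun t : ℝ => ((Hhatr n t : ℝ) : ℂ)) ((H1 t : ℝ):ℂ) t :=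
    fun t => (a1 t).ofReal_comp
  have e2 : ∀ t : ℝ, HasDerivAt (fun t : ℝ => ((H1 t : ℝ) : ℂ)) ((H2 t : ℝ):ℂ) t :=
    fun t => (a2 t).ofReal_comp
  have w : ∀ t : ℝ, HasDerivAt (fun t : ℝ => ((Real.exp (-t^2) / (1+2*t^2)^2 : ℝ) : ℂ)) _ t :=
    fun t => (weight_d t).ofReal_comp
  set F : ℝ → ℂ := fun t => (((Hhatr n t : ℝ) : ℂ) * B1 t - ((H1 t : ℝ) : ℂ) * betaF n t) *
    ((Real.exp (-t^2) / (1+2*t^2)^2 : ℝ) : ℂ) with hF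
  have dF : ∀ t : ℝ, HasDerivAt F 0 t := by
    intro t
    have := (((e1 t).mul (d2 t)).sub ((e2 t).mul (d1 t))).mul (w t)
    refine HasDerivAt.congr_deriv this ?_
    have hp := ofReal_ne t
    have A : (1+2*(t:ℂ)^2) * (H2 t : ℂ) - (2*t*(1+2*(t:ℂ)^2)+8*t) * (H1 t : ℂ)
        + 2*(n:ℂ)*(1+2*(t:ℂ)^2)* (Hhatr n t : ℂ) = 0 := by exact_mod_cast a3 t
    have B := b3 (t:ℂ)
    simp only [Pi.sub_apply, Pi.mul_apply]
    push_cast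
    generalize (1 + 2 * (t:ℂ)^2) = D at *
    field_simp
    linear_combination (Complex.exp (-(t:ℂ)^2)) * ((Hhatr n t : ℂ) * B - betaF n t * A)
  have hc := is_const_of_deriv_eq_zero (fun t => (dF t).differentiableAt) (fun t => (dF t).deriv) x 0
  have hF0 : F 0 = Cw n := by
    rw [hF, ← a4]; simp [b4, b5]
  have main : (Complex.ofReal (Hhatr n x)) * deriv (fun t : ℝ => betaF n (t : ℂ)) x
        - (Complex.ofReal (deriv (Hhatr n) x)) * betaF n (x : ℂ)
      = Cw n * Complex.exp ((x : ℂ) ^ 2) * (1 + 2 * (x : ℂ) ^ 2) ^ 2 := by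
    rw [(d1 x).deriv, (a1 x).deriv, ← hF0, ← hc, hF]
    have hp := ofReal_ne x
    have hE : Complex.exp (-(x:ℂ)^2) * Complex.exp ((x:ℂ)^2) = 1 := by
      rw [← Complex.exp_add]; simp
    push_cast
    generalize (1 + 2 * (x:ℂ)^2) = D at *
    field_simp
    linear_combination (-((Hhatr n x : ℂ) * B1 x - (H1 x : ℂ) * betaF n x)) * hE
  refine ⟨main, ?_⟩
  rw [main]
  exact mul_ne_zero (mul_ne_zero a5 (Complex.exp_ne_zero _)) (pow_ne_zero _ (ofReal_ne x))
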